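/- For every generalised clause-set F: (1) F is satisfiable if and only if its direct translation Γ(F) is satisfiable; (2) F is minimally unsatisfiable if and only if Γ(F) is minimally unsatisfiable; (3) F is lean if and only if Γ(F) is lean. -/

import Mathlib

open scoped Classical

namespace GCLS

variable {V α : Type} [DecidableEq V] [DecidableEq α]

/-- A finite "functional" set of (variable, value) pairs, with values inside the
given domains `D`; used both for clauses and for partial assignments. -/
def FinFn (D : V → Finset α) : Type :=
  { s : Finset (V × α) // (∀ p ∈ s, p.2 ∈ D p.1) ∧
      ∀ p ∈ s, ∀ q ∈ s, p.1 = q.1 → p = q }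

variable {D : V → Finset α}

instance : DecidableEq (FinFn D) :=
  fun a b => decidable_of_iff (a.1 = b.1) Subtype.ext_iff.symm

namespace FinFn

/-- The set of variables occurring. -/
def vars (s : FinFn D) : Finset V := s.1.image Prod.fst

/-- Restriction to the pairs whose variable lies in `W`. -/
def restrictVars (s : FinFn D) (W : Finset V) : FinFn D :=
  ⟨s.1.filter (fun p => p.1 ∈ W),
   fun p hp => s.2.1 p (Finset.mem_filter.mp hp).1,
   fun p hp q hq h =>
     s.2.2 p (Finset.mem_filter.mp hp).1 q (Finset.mem_filter.mp hq).1 h⟩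

/-- Removal of a set of pairs. -/
def sdiff (s : FinFn D) (t : Finset (V × α)) : FinFn D :=
  ⟨s.1 \ t,
   fun p hp => s.2.1 p (Finset.mem_sdiff.mp hp).1,
   fun p hp q hq h =>
     s.2.2 p (Finset.mem_sdiff.mp hp).1 q (Finset.mem_sdiff.mp hq).1 h⟩

end FinFn

/-- Clauses: finite sets of literals `(v,ε)` (meaning "v ≠ ε"), at most one literal
per variable, values inside the domains. -/
abbrev Clause (D : V → Finset α) := FinFn D

/-- Partial assignments: finitely many variables get values inside their domains. -/
abbrev PAssign (D : V → Finset α) := FinFn D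

/-- `φ` satisfies the literal `(v,ε)` (i.e. "v ≠ ε"): `v` is assigned a value ≠ `ε`. -/
def SatLit (φ : PAssign D) (l : V × α) : Prop :=
  ∃ ε, (l.1, ε) ∈ φ.1 ∧ ε ≠ l.2

/-- `φ` satisfies a clause iff it satisfies some literal of it. -/
def SatClause (φ : PAssign D) (C : Clause D) : Prop :=
  ∃ l ∈ C.1, SatLit φ l

/-- The clause obtained from `C` by deleting all literals falsified by `φ`. -/
def Clause.restrict (φ : PAssign D) (C : Clause D) : Clause D :=
  FinFn.sdiff C φ.1

/-- The operation `φ * F` on multi-clause-sets: remove all clauses satisfied by `φ`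
and delete all falsified literals from the remaining clauses. -/
noncomputable def applyM (φ : PAssign D) (F : Multiset (Clause D)) : Multiset (Clause D) :=
  (F.filter (fun C => ¬ SatClause φ C)).map (Clause.restrict φ)

/-- The operation `φ * F` on clause-sets (with contraction of equal clauses). -/
noncomputable def applyF (φ : PAssign D) (F : Finset (Clause D)) : Finset (Clause D) :=
  (F.filter (fun C => ¬ SatClause φ C)).image (Clause.restrict φ)

/-- Satisfiability: some partial assignment satisfies all clauses. -/
def Sat (F : Multiset (Clause D)) : Prop :=
  ∃ φ : PAssign D, applyM φ F = 0

/-- Minimal unsatisfiability of a clause-set. -/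
def MinUnsat (F : Finset (Clause D)) : Prop :=
  ¬ Sat F.val ∧ ∀ F' ⊂ F, Sat F'.val

/-- The variables of a multi-clause-set. -/
def mvars (F : Multiset (Clause D)) : Finset V := F.toFinset.sup FinFn.vars

/-- The deficiency `δ(F) = c(F) - Σ_{v ∈ var(F)} (|D_v| - 1)`. -/
def delta (F : Multiset (Clause D)) : ℤ :=
  (Multiset.card F : ℤ) - ∑ v ∈ mvars F, ((D v).card - 1 : ℤ)

lemma powerset_toFinset_nonempty (F : Multiset (Clause D)) :
    F.powerset.toFinset.Nonempty :=
  ⟨0, by simp⟩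

/-- The maximal deficiency `δ*(F) = max {δ(F') : F' ≤ F}`. -/
noncomputable def deltaStar (F : Multiset (Clause D)) : ℤ :=
  F.powerset.toFinset.sup' (powerset_toFinset_nonempty F) delta

/-- A tight sub-multi-clause-set: `F' ≤ F` with `δ(F') = δ*(F)`. -/
noncomputable def Tight (F F' : Multiset (Clause D)) : Prop :=
  F' ≤ F ∧ delta F' = deltaStar F

/-- `F` is matching satisfiable: the clause-variable graph `B(F)` has a matching
covering all clause-nodes.  Such a matching is encoded as a multiset `P` of pairs
(clause-occurrence, variable-node), where the variable-nodes `(v,k)`,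
`k < |D v| - 1`, are the copies of the variable `v`; the matching covers each
clause-occurrence exactly once (`P.map Prod.fst = F`), uses pairwise distinct
variable-nodes, and respects adjacency in `B(F)`. -/
def MatchingSat (F : Multiset (Clause D)) : Prop :=
  ∃ P : Multiset (Clause D × (V × ℕ)),
    P.map Prod.fst = F ∧ (P.map Prod.snd).Nodup ∧
    ∀ p ∈ P, p.2.1 ∈ FinFn.vars p.1 ∧ p.2.2 < (D p.2.1).card - 1

/-- The edge between clause `C` and the copies of variable `v` is retained in
`B_φ(F)`: the literal of `C` with variable `v` is satisfied by `φ`. -/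
def EdgeSat (φ : PAssign D) (C : Clause D) (v : V) : Prop :=
  ∃ ε, (v, ε) ∈ C.1 ∧ SatLit φ (v, ε)

/-- `φ` is matching-satisfying for `F`: `B_φ(F)` has a matching covering all
clause-nodes. -/
def MatchingSatisfying (φ : PAssign D) (F : Multiset (Clause D)) : Prop :=
  ∃ P : Multiset (Clause D × (V × ℕ)),
    P.map Prod.fst = F ∧ (P.map Prod.snd).Nodup ∧
    ∀ p ∈ P, p.2.2 < (D p.2.1).card - 1 ∧ EdgeSat φ p.1 p.2.1

/-- The maximum size of a matching in `B(F)`. -/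
noncomputable def nu (F : Multiset (Clause D)) : ℕ :=
  sSup { k | ∃ P : Multiset (Clause D × (V × ℕ)),
    P.map Prod.fst ≤ F ∧ (P.map Prod.snd).Nodup ∧
    (∀ p ∈ P, p.2.1 ∈ FinFn.vars p.1 ∧ p.2.2 < (D p.2.1).card - 1) ∧
    Multiset.card P = k }

/-- The maximum size of a matching in `B_φ(F)`. -/
noncomputable def nuSub (φ : PAssign D) (F : Multiset (Clause D)) : ℕ :=
  sSup { k | ∃ P : Multiset (Clause D × (V × ℕ)),
    P.map Prod.fst ≤ F ∧ (P.map Prod.snd).Nodup ∧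
    (∀ p ∈ P, p.2.2 < (D p.2.1).card - 1 ∧ EdgeSat φ p.1 p.2.1) ∧
    Multiset.card P = k }

/-- `φ` is matching-maximum for `F`. -/
noncomputable def MatchingMaximum (φ : PAssign D) (F : Multiset (Clause D)) : Prop :=
  nuSub φ F = nu F

/-- `φ` is an autarky for `F`: every clause touched by `φ` is satisfied by `φ`. -/
def IsAutarky (φ : PAssign D) (F : Multiset (Clause D)) : Prop :=
  ∀ C ∈ F, (FinFn.vars C ∩ FinFn.vars φ).Nonempty → SatClause φ C

/-- `F` is lean: it has no non-trivial autarky. -/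
def IsLean (F : Multiset (Clause D)) : Prop :=
  ¬ ∃ φ : PAssign D, IsAutarky φ F ∧ (FinFn.vars φ ∩ mvars F).Nonempty

/-- The sub-multi-clause-set of clauses touched by the variables in `W`. -/
noncomputable def touchedBy (F : Multiset (Clause D)) (W : Finset V) : Multiset (Clause D) :=
  F.filter (fun C => (FinFn.vars C ∩ W).Nonempty)

/-- The restriction `F[W]`: keep the clauses touching `W` and delete from them all
literals whose variable is not in `W`. -/
noncomputable def restrictTo (F : Multiset (Clause D)) (W : Finset V) : Multiset (Clause D) :=
  (touchedBy F W).map (fun C => FinFn.restrictVars C W)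

/-- `φ` is a matching autarky for `F`: `φ` is matching-satisfying for the
sub-multi-clause-set of clauses touched by `φ`. -/
noncomputable def IsMatchingAutarky (φ : PAssign D) (F : Multiset (Clause D)) : Prop :=
  MatchingSatisfying φ (touchedBy F (FinFn.vars φ))

/-- `F` is matching lean: no non-trivial matching autarky. -/
noncomputable def MatchingLean (F : Multiset (Clause D)) : Prop :=
  ¬ ∃ φ : PAssign D, IsMatchingAutarky φ F ∧ (FinFn.vars φ ∩ mvars F).Nonempty

lemma surp_nonempty {F : Multiset (Clause D)} (h : (mvars F).Nonempty) :
    ((mvars F).powerset.erase ∅).Nonempty := by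
  obtain ⟨v, hv⟩ := h
  refine ⟨{v}, ?_⟩
  simp [Finset.mem_erase, Finset.singleton_subset_iff, hv]

/-- The surplus `surp(F) = min {δ(F[W]) : ∅ ≠ W ⊆ var(F)}` (and `0` if `var(F) = ∅`). -/
noncomputable def surp (F : Multiset (Clause D)) : ℤ :=
  if h : (mvars F).Nonempty then
    ((mvars F).powerset.erase ∅).inf' (surp_nonempty h)
      (fun W => delta (restrictTo F W))
  else 0

/-- The number of occurrences of the literal `l` in `F`. -/
noncomputable def litCount (F : Multiset (Clause D)) (l : V × α) : ℕ :=
  Multiset.card (F.filter (fun C => l ∈ C.1))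

/-- The number of occurrences `#_v(F)` of the variable `v` in `F`. -/
noncomputable def varCount (F : Multiset (Clause D)) (v : V) : ℕ :=
  ∑ ε ∈ D v, litCount F (v, ε)

/-- The partial assignment `⟨v → ε⟩`. -/
def single (v : V) (ε : α) (hε : ε ∈ D v) : PAssign D :=
  ⟨{(v, ε)}, by
    refine ⟨?_, ?_⟩
    · intro p hp
      rw [Finset.mem_singleton] at hp
      subst hp; exact hε
    · intro p hp q hq _
      rw [Finset.mem_singleton] at hp hq
      subst hp; subst hq; rfl⟩

/-- Composition `φ ∘ ψ` of partial assignments: domain is the union of the domains,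
`ψ` taking precedence. -/
def comp (φ ψ : PAssign D) : PAssign D :=
  ⟨ψ.1 ∪ φ.1.filter (fun p => p.1 ∉ FinFn.vars ψ), by
    constructor
    · intro p hp
      rcases Finset.mem_union.mp hp with h | h
      · exact ψ.2.1 p h
      · exact φ.2.1 p (Finset.mem_filter.mp h).1
    · intro p hp q hq hpq
      rcases Finset.mem_union.mp hp with h1 | h1 <;>
        rcases Finset.mem_union.mp hq with h2 | h2
      · exact ψ.2.2 p h1 q h2 hpq
      · exact absurd (hpq ▸ Finset.mem_image_of_mem Prod.fst h1)
          (Finset.mem_filter.mp h2).2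
      · exact absurd (hpq.symm ▸ Finset.mem_image_of_mem Prod.fst h2)
          (Finset.mem_filter.mp h1).2
      · exact φ.2.2 p (Finset.mem_filter.mp h1).1 q (Finset.mem_filter.mp h2).1 hpq⟩

/-- Two clauses clash (in some variable). -/
def Clash (C C' : Clause D) : Prop :=
  ∃ v ε ε', (v, ε) ∈ C.1 ∧ (v, ε') ∈ C'.1 ∧ ε ≠ ε'

/-- The number of variables in which two clauses clash. -/
noncomputable def clashCount (C C' : Clause D) : ℕ :=
  ((FinFn.vars C).filter
    (fun v => ∃ ε ε', (v, ε) ∈ C.1 ∧ (v, ε') ∈ C'.1 ∧ ε ≠ ε')).card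

/-- Hitting clause-sets: every two distinct clauses clash. -/
def Hitting (F : Finset (Clause D)) : Prop :=
  ∀ C ∈ F, ∀ C' ∈ F, C ≠ C' → Clash C C'

/-- Boolean clauses over the boolean variables `V × α` (one boolean variable per
generalised literal; the value `false` gives the positive boolean literal). -/
abbrev BClause (V α : Type) :=
  Clause (fun _ : V × α => (Finset.univ : Finset Bool))

/-- The direct translation of a single clause: each literal `(v,ε)` is replaced by
the positive boolean literal of the boolean variable `(v,ε)`. -/
def dirClause (C : Clause D) : BClause V α :=
  ⟨C.1.image (fun p => (p, false)), by
    constructor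
    · intro p _; exact Finset.mem_univ _
    · intro p hp q hq h
      simp only [Finset.mem_image] at hp hq
      obtain ⟨a, -, rfl⟩ := hp
      obtain ⟨b, -, rfl⟩ := hq
      exact congrArg (fun x => (x, false)) h⟩

/-- The ALO-clause for a variable `v`: the negative boolean literals of the boolean
variables `(v,ε)` for `ε ∈ D v`. -/
def aloClause (D : V → Finset α) (v : V) : BClause V α :=
  ⟨(D v).image (fun ε => ((v, ε), true)), by
    constructor
    · intro p _; exact Finset.mem_univ _
    · intro p hp q hq h
      simp only [Finset.mem_image] at hp hq
      obtain ⟨a, -, rfl⟩ := hp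
      obtain ⟨b, -, rfl⟩ := hq
      exact congrArg (fun x => (x, true)) h⟩

/-- The direct translation `Γ(F)`: the translated clauses together with the
ALO-clauses for all occurring variables. -/
noncomputable def dirTrans (F : Finset (Clause D)) : Finset (BClause V α) :=
  F.image dirClause ∪ (mvars F.val).image (aloClause D)

/-!
A partial assignment `φ` is encoded by the boolean assignment giving `(v, ε)`, for `v ∈ var(φ)` and
`ε ∈ D v`, the truth value of `φ(v) ≠ ε`. It satisfies `τ(C)` iff `φ` satisfies `C`, and `ALO_v` iff
`v ∈ var(φ)`. Conversely, a boolean assignment `g` is decoded by picking, for every `v` with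
`ALO_v` satisfied, some `ε ∈ D v` with `g(v, ε) = 0`. Both directions preserve satisfaction and
autarkies: an autarky of `Γ(F)` touching some `(v, ε)` touches and hence satisfies `ALO_v`, so
decoding loses no variable of `F`.

For minimality, let `φ` satisfy all clauses of `F` except `C`. The encoding of a total extension of
`φ` satisfies all clauses of `Γ(F)` except possibly `τ(C)`. Setting `(v, ε)` to `1` for a literal
`(v, ε)` of `C` then satisfies all clauses except possibly `ALO_v`.
-/

namespace FinFn

omit [DecidableEq α]

lemma mem_vars {φ : FinFn D} {v : V} : v ∈ φ.vars ↔ ∃ ε, (v, ε) ∈ φ.1 := by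
  simp [vars]

lemma fst_mem_vars {φ : FinFn D} {l : V × α} (hl : l ∈ φ.1) : l.1 ∈ φ.vars :=
  Finset.mem_image_of_mem Prod.fst hl

lemma exists_subset_vars_eq {s : Finset (V × α)} (hs : ∀ p ∈ s, p.2 ∈ D p.1) :
    ∃ φ : FinFn D, φ.1 ⊆ s ∧ φ.vars = s.image Prod.fst := by
  obtain ⟨t, hts, hinj, himage⟩ := Finset.exists_subset_injOn_image_eq_of_surjOn
    (s : Set (V × α)) (s.image Prod.fst) (by
      rw [Finset.coe_image]
      exact Set.surjOn_image Prod.fst _)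
  exact ⟨⟨t, fun p hp => hs p (hts hp), fun p hp q hq => hinj hp hq⟩, hts, himage⟩

end FinFn

lemma mem_mvars {F : Multiset (Clause D)} {v : V} : v ∈ mvars F ↔ ∃ C ∈ F, v ∈ C.vars := by
  simp [mvars, Finset.mem_sup]

lemma mvars_mono {F G : Multiset (Clause D)} (h : F ⊆ G) : mvars F ⊆ mvars G := by
  intro v hv
  obtain ⟨C, hC, hvC⟩ := mem_mvars.1 hv
  exact mem_mvars.2 ⟨C, h hC, hvC⟩

lemma nonempty_of_mem_mvars {F : Multiset (Clause D)} {v : V} (hv : v ∈ mvars F) :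
    (D v).Nonempty := by
  obtain ⟨C, -, hvC⟩ := mem_mvars.1 hv
  obtain ⟨ε, hε⟩ := FinFn.mem_vars.1 hvC
  exact ⟨ε, C.2.1 _ hε⟩

lemma mem_comp {φ ψ : PAssign D} {p : V × α} :
    p ∈ (comp φ ψ).1 ↔ p ∈ ψ.1 ∨ p ∈ φ.1 ∧ p.1 ∉ ψ.vars := by
  simp [comp]

lemma vars_comp (φ ψ : PAssign D) : (comp φ ψ).vars = φ.vars ∪ ψ.vars := by
  ext v
  by_cases hv : v ∈ ψ.vars
  · simpa [FinFn.mem_vars, mem_comp, hv] using FinFn.mem_vars.1 hv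
  · have hv' : ∀ ε, (v, ε) ∉ ψ.1 := by simpa [FinFn.mem_vars] using hv
    simp [FinFn.mem_vars, mem_comp, hv']

lemma exists_superset_mvars_subset_vars (φ : PAssign D) (F : Multiset (Clause D)) :
    ∃ ψ : PAssign D, φ.1 ⊆ ψ.1 ∧ mvars F ⊆ ψ.vars := by
  obtain ⟨χ, -, hχ⟩ := FinFn.exists_subset_vars_eq (D := D)
    (s := F.toFinset.biUnion fun C => C.1) fun p hp => by
      obtain ⟨C, -, hpC⟩ := Finset.mem_biUnion.1 hp
      exact C.2.1 p hpC
  have hmvars : mvars F ⊆ χ.vars := by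
    intro v hv
    obtain ⟨C, hC, hvC⟩ := mem_mvars.1 hv
    obtain ⟨ε, hε⟩ := FinFn.mem_vars.1 hvC
    rw [hχ]
    exact Finset.mem_image_of_mem Prod.fst
      (Finset.mem_biUnion.2 ⟨C, Multiset.mem_toFinset.2 hC, hε⟩)
  refine ⟨comp χ φ, fun p hp => mem_comp.2 (.inl hp), hmvars.trans ?_⟩
  rw [vars_comp]
  exact Finset.subset_union_left

omit [DecidableEq V] [DecidableEq α] in
lemma SatClause.mono {φ ψ : PAssign D} (hφψ : φ.1 ⊆ ψ.1) {C : Clause D} (h : SatClause φ C) :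
    SatClause ψ C := by
  obtain ⟨l, hl, ε, hε, hne⟩ := h
  exact ⟨l, hl, ε, hφψ hε, hne⟩

lemma sat_iff_exists_forall_satClause {F : Multiset (Clause D)} :
    Sat F ↔ ∃ φ : PAssign D, ∀ C ∈ F, SatClause φ C := by
  simp [Sat, applyM, Multiset.filter_eq_nil]

lemma Sat.mono {F G : Multiset (Clause D)} (hFG : F ⊆ G) (h : Sat G) : Sat F := by
  obtain ⟨φ, hφ⟩ := sat_iff_exists_forall_satClause.1 h
  exact sat_iff_exists_forall_satClause.2 ⟨φ, fun C hC => hφ C (hFG hC)⟩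

lemma sat_erase_iff {F : Finset (Clause D)} {C : Clause D} :
    Sat (F.erase C).val ↔ ∃ φ : PAssign D, ∀ B ∈ F, B ≠ C → SatClause φ B := by
  simp only [sat_iff_exists_forall_satClause, Finset.mem_val, Finset.mem_erase, and_imp]
  exact exists_congr fun φ => forall_congr' fun B => forall_comm

lemma Sat.exists_mvars_subset_vars {F : Multiset (Clause D)} (h : Sat F)
    (G : Multiset (Clause D)) :
    ∃ φ : PAssign D, mvars G ⊆ φ.vars ∧ ∀ C ∈ F, SatClause φ C := by
  obtain ⟨φ, hφ⟩ := sat_iff_exists_forall_satClause.1 h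
  obtain ⟨ψ, hφψ, hψ⟩ := exists_superset_mvars_subset_vars φ G
  exact ⟨ψ, hψ, fun C hC => (hφ C hC).mono hφψ⟩

lemma minUnsat_iff_forall_sat_erase {F : Finset (Clause D)} :
    MinUnsat F ↔ ¬ Sat F.val ∧ ∀ C ∈ F, Sat (F.erase C).val := by
  refine and_congr_right fun _ => ⟨fun h C hC => h _ (Finset.erase_ssubset hC), fun h G hG => ?_⟩
  obtain ⟨C, hC, hCG⟩ := Finset.exists_of_ssubset hG
  exact (h C hC).mono (Finset.subset_erase.2 ⟨hG.subset, hCG⟩)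

lemma mem_dirClause {C : Clause D} {l : V × α} {b : Bool} :
    (l, b) ∈ (dirClause C).1 ↔ l ∈ C.1 ∧ b = false := by
  simp only [dirClause, Finset.mem_image, Prod.mk.injEq]
  grind

lemma mem_aloClause {v w : V} {ε : α} {b : Bool} :
    ((w, ε), b) ∈ (aloClause D v).1 ↔ w = v ∧ ε ∈ D v ∧ b = true := by
  simp only [aloClause, Finset.mem_image, Prod.mk.injEq]
  grind

lemma mem_vars_dirClause {C : Clause D} {l : V × α} : l ∈ (dirClause C).vars ↔ l ∈ C.1 := by
  rw [FinFn.mem_vars]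
  simp [mem_dirClause]

lemma mem_vars_aloClause {v w : V} {ε : α} :
    (w, ε) ∈ (aloClause D v).vars ↔ w = v ∧ ε ∈ D v := by
  rw [FinFn.mem_vars]
  simp [mem_aloClause]

lemma dirClause_injective : Function.Injective (dirClause : Clause D → BClause V α) := by
  intro C C' h
  refine Subtype.ext (Finset.ext fun l => ?_)
  rw [← mem_vars_dirClause, h, mem_vars_dirClause]

lemma dirClause_ne_aloClause (C : Clause D) {v : V} (hv : (D v).Nonempty) :
    dirClause C ≠ aloClause D v := by
  obtain ⟨ε, hε⟩ := hv
  intro h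
  have hmem : ((v, ε), true) ∈ (dirClause C).1 := h ▸ mem_aloClause.2 ⟨rfl, hε, rfl⟩
  exact Bool.noConfusion (mem_dirClause.1 hmem).2

lemma forall_mem_dirTrans {F : Finset (Clause D)} {P : BClause V α → Prop} :
    (∀ B ∈ dirTrans F, P B) ↔
      (∀ C ∈ F, P (dirClause C)) ∧ ∀ v ∈ mvars F.val, P (aloClause D v) := by
  simp [dirTrans, or_imp, forall_and]

lemma dirClause_mem_dirTrans {F : Finset (Clause D)} {C : Clause D} :
    dirClause C ∈ dirTrans F ↔ C ∈ F := by
  have hne : ∀ v ∈ mvars F.val, aloClause D v ≠ dirClause C := fun v hv =>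
    (dirClause_ne_aloClause C (nonempty_of_mem_mvars hv)).symm
  simpa [dirTrans, dirClause_injective.eq_iff] using fun v hv h => absurd h (hne v hv)

lemma aloClause_mem_dirTrans {F : Finset (Clause D)} {v : V} (hv : v ∈ mvars F.val) :
    aloClause D v ∈ dirTrans F :=
  Finset.mem_union_right _ (Finset.mem_image_of_mem _ hv)

lemma dirTrans_mono {F G : Finset (Clause D)} (h : F ⊆ G) : dirTrans F ⊆ dirTrans G :=
  Finset.union_subset_union (Finset.image_subset_image h)
    (Finset.image_subset_image (mvars_mono h))

lemma dirTrans_erase_subset (F : Finset (Clause D)) (C : Clause D) :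
    dirTrans (F.erase C) ⊆ (dirTrans F).erase (dirClause C) :=
  Finset.subset_erase.2 ⟨dirTrans_mono (Finset.erase_subset C F), by
    simp [dirClause_mem_dirTrans]⟩

lemma mem_mvars_dirTrans {F : Finset (Clause D)} {v : V} {ε : α} :
    (v, ε) ∈ mvars (dirTrans F).val ↔ v ∈ mvars F.val ∧ ε ∈ D v := by
  constructor
  · intro h
    obtain ⟨B, hB, hvB⟩ := mem_mvars.1 h
    revert B
    refine forall_mem_dirTrans.2 ⟨fun C hC hl => ?_, fun w hw hl => ?_⟩
    · have hlC : (v, ε) ∈ C.1 := mem_vars_dirClause.1 hl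
      exact ⟨mem_mvars.2 ⟨C, hC, FinFn.fst_mem_vars hlC⟩, C.2.1 _ hlC⟩
    · obtain ⟨rfl, hε⟩ := mem_vars_aloClause.1 hl
      exact ⟨hw, hε⟩
  · rintro ⟨hv, hε⟩
    exact mem_mvars.2 ⟨_, aloClause_mem_dirTrans hv, mem_vars_aloClause.2 ⟨rfl, hε⟩⟩

/-- Partial assignments to the boolean variables `V × α` of the direct translation. -/
abbrev BAssign (V α : Type) :=
  PAssign (fun _ : V × α => (Finset.univ : Finset Bool))

lemma satClause_dirClause_iff {g : BAssign V α} {C : Clause D} :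
    SatClause g (dirClause C) ↔ ∃ l ∈ C.1, (l, true) ∈ g.1 := by
  simp [SatClause, SatLit, mem_dirClause]

lemma satClause_aloClause_iff {g : BAssign V α} {v : V} :
    SatClause g (aloClause D v) ↔ ∃ ε ∈ D v, ((v, ε), false) ∈ g.1 := by
  simp [SatClause, SatLit, mem_aloClause]

/-- The boolean encoding of a partial assignment `φ`: for `v ∈ var(φ)` and `ε ∈ D v`, the boolean
variable `(v, ε)`, which stands for the literal `v ≠ ε`, gets the truth value of `φ(v) ≠ ε`. -/
def dirAssign (φ : PAssign D) : BAssign V α :=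
  ⟨φ.1.biUnion fun p => (D p.1).image fun ε => ((p.1, ε), decide (p.2 ≠ ε)), by
    refine ⟨fun _ _ => Finset.mem_univ _, fun p hp q hq hpq => ?_⟩
    simp only [Finset.mem_biUnion, Finset.mem_image] at hp hq
    obtain ⟨a, ha, ε, -, rfl⟩ := hp
    obtain ⟨b, hb, δ, -, rfl⟩ := hq
    obtain ⟨hab, rfl⟩ := Prod.mk.inj hpq
    rw [φ.2.2 a ha b hb hab]⟩

lemma mem_dirAssign {φ : PAssign D} {v : V} {ε : α} {b : Bool} :
    ((v, ε), b) ∈ (dirAssign φ).1 ↔ ε ∈ D v ∧ ∃ δ, (v, δ) ∈ φ.1 ∧ decide (δ ≠ ε) = b := by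
  simp only [dirAssign, Finset.mem_biUnion, Finset.mem_image, Prod.mk.injEq, Prod.exists]
  grind

lemma mem_vars_dirAssign {φ : PAssign D} {v : V} {ε : α} :
    (v, ε) ∈ (dirAssign φ).vars ↔ v ∈ φ.vars ∧ ε ∈ D v := by
  rw [FinFn.mem_vars, FinFn.mem_vars]
  simp only [mem_dirAssign]
  grind

lemma satClause_dirAssign_dirClause {φ : PAssign D} {C : Clause D} :
    SatClause (dirAssign φ) (dirClause C) ↔ SatClause φ C := by
  rw [satClause_dirClause_iff]
  refine exists_congr fun ⟨v, ε⟩ => and_congr_right fun hl => ?_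
  simp [mem_dirAssign, SatLit, C.2.1 _ hl]

lemma satClause_dirAssign_aloClause {φ : PAssign D} {v : V} :
    SatClause (dirAssign φ) (aloClause D v) ↔ v ∈ φ.vars := by
  simp only [satClause_aloClause_iff, mem_dirAssign, FinFn.mem_vars, decide_eq_false_iff_not,
    not_not, exists_eq_right]
  exact exists_congr fun ε => ⟨fun h => h.2.2, fun h => ⟨φ.2.1 _ h, φ.2.1 _ h, h⟩⟩

/-- `φ` decodes the boolean assignment `g`: it gives each variable whose ALO-clause is satisfied
by `g` one of its values `ε` with `g(v, ε)` false. There may be several such values, so the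
decoding is a relation rather than a function. -/
structure IsDecoding (g : BAssign V α) (φ : PAssign D) : Prop where
  false_mem : ∀ l ∈ φ.1, (l, false) ∈ g.1
  mem_vars_of_satClause : ∀ v, SatClause g (aloClause D v) → v ∈ φ.vars

lemma exists_isDecoding (g : BAssign V α) : ∃ φ : PAssign D, IsDecoding g φ := by
  obtain ⟨φ, hφ, hvars⟩ := FinFn.exists_subset_vars_eq (D := D)
    (s := g.vars.filter fun l => (l, false) ∈ g.1 ∧ l.2 ∈ D l.1)
    fun l hl => (Finset.mem_filter.1 hl).2.2
  refine ⟨φ, fun l hl => (Finset.mem_filter.1 (hφ hl)).2.1, fun v hv => ?_⟩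
  obtain ⟨ε, hε, hg⟩ := satClause_aloClause_iff.1 hv
  rw [hvars]
  exact Finset.mem_image.2
    ⟨(v, ε), Finset.mem_filter.2 ⟨FinFn.fst_mem_vars hg, hg, hε⟩, rfl⟩

lemma IsDecoding.satLit {g : BAssign V α} {φ : PAssign D} (h : IsDecoding g φ) {l : V × α}
    (hl : (l, true) ∈ g.1) (hv : l.1 ∈ φ.vars) : SatLit φ l := by
  obtain ⟨ε, hε⟩ := FinFn.mem_vars.1 hv
  refine ⟨ε, hε, ?_⟩
  rintro rfl
  exact Bool.noConfusion (Prod.mk.inj (g.2.2 _ hl _ (h.false_mem _ hε) rfl)).2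

lemma sat_dirTrans_iff {F : Finset (Clause D)} : Sat (dirTrans F).val ↔ Sat F.val := by
  constructor
  · intro h
    obtain ⟨g, hg⟩ := sat_iff_exists_forall_satClause.1 h
    obtain ⟨hdir, halo⟩ := forall_mem_dirTrans.1 hg
    obtain ⟨φ, hφ⟩ := exists_isDecoding (D := D) g
    refine sat_iff_exists_forall_satClause.2 ⟨φ, fun C hC => ?_⟩
    obtain ⟨l, hl, hgl⟩ := satClause_dirClause_iff.1 (hdir C hC)
    have hv : l.1 ∈ mvars F.val := mem_mvars.2 ⟨C, hC, FinFn.fst_mem_vars hl⟩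
    exact ⟨l, hl, hφ.satLit hgl (hφ.mem_vars_of_satClause _ (halo _ hv))⟩
  · intro h
    obtain ⟨φ, htotal, hφ⟩ := h.exists_mvars_subset_vars F.val
    exact sat_iff_exists_forall_satClause.2 ⟨dirAssign φ, forall_mem_dirTrans.2
      ⟨fun C hC => satClause_dirAssign_dirClause.2 (hφ C hC),
        fun v hv => satClause_dirAssign_aloClause.2 (htotal hv)⟩⟩

lemma sat_dirTrans_erase_dirClause {F : Finset (Clause D)} {C : Clause D}
    (h : Sat (F.erase C).val) : Sat ((dirTrans F).erase (dirClause C)).val := by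
  obtain ⟨φ, htotal, hφ⟩ := h.exists_mvars_subset_vars F.val
  refine sat_erase_iff.2 ⟨dirAssign φ, forall_mem_dirTrans.2 ⟨fun C' hC' hne => ?_, ?_⟩⟩
  · have hC'_mem : C' ∈ F.erase C := Finset.mem_erase.2 ⟨ne_of_apply_ne dirClause hne, hC'⟩
    exact satClause_dirAssign_dirClause.2 (hφ C' hC'_mem)
  · exact fun v hv _ => satClause_dirAssign_aloClause.2 (htotal hv)

/-- The boolean assignment obtained from `g` by setting the variable `l` to true, which repairs
a translated clause containing `l` at the expense of the ALO-clause of `l.1`. -/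
def setTrue (g : BAssign V α) (l : V × α) : BAssign V α :=
  comp g (single l true (Finset.mem_univ _))

lemma mem_setTrue {g : BAssign V α} {l m : V × α} {b : Bool} :
    (m, b) ∈ (setTrue g l).1 ↔ m = l ∧ b = true ∨ (m, b) ∈ g.1 ∧ m ≠ l := by
  rw [setTrue, mem_comp]
  simp [single, FinFn.vars]

lemma satClause_setTrue_dirClause {g : BAssign V α} {l : V × α} {C : Clause D} :
    SatClause (setTrue g l) (dirClause C) ↔ l ∈ C.1 ∨ SatClause g (dirClause C) := by
  simp only [satClause_dirClause_iff, mem_setTrue]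
  grind

lemma satClause_setTrue_aloClause {g : BAssign V α} {l : V × α} {v : V} (hv : v ≠ l.1) :
    SatClause (setTrue g l) (aloClause D v) ↔ SatClause g (aloClause D v) := by
  simp only [satClause_aloClause_iff, mem_setTrue]
  grind

lemma sat_dirTrans_erase_aloClause {F : Finset (Clause D)} {C : Clause D}
    (h : Sat (F.erase C).val) {v : V} (hv : v ∈ C.vars) :
    Sat ((dirTrans F).erase (aloClause D v)).val := by
  obtain ⟨ε, hε⟩ := FinFn.mem_vars.1 hv
  obtain ⟨φ, htotal, hφ⟩ := h.exists_mvars_subset_vars F.val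
  refine sat_erase_iff.2 ⟨setTrue (dirAssign φ) (v, ε), forall_mem_dirTrans.2
    ⟨fun C' hC' _ => satClause_setTrue_dirClause.2 ?_, fun w hw hne => ?_⟩⟩
  · by_cases hCC' : C' = C
    · exact .inl (hCC' ▸ hε)
    · exact .inr (satClause_dirAssign_dirClause.2 (hφ C' (Finset.mem_erase.2 ⟨hCC', hC'⟩)))
  · have hwv : w ≠ v := ne_of_apply_ne (aloClause D) hne
    exact (satClause_setTrue_aloClause hwv).2 (satClause_dirAssign_aloClause.2 (htotal hw))

lemma minUnsat_dirTrans_iff {F : Finset (Clause D)} : MinUnsat (dirTrans F) ↔ MinUnsat F := by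
  rw [minUnsat_iff_forall_sat_erase, minUnsat_iff_forall_sat_erase, sat_dirTrans_iff]
  refine and_congr_right fun _ => ⟨fun h C hC => ?_, fun h => forall_mem_dirTrans.2
    ⟨fun C hC => sat_dirTrans_erase_dirClause (h C hC), fun v hv => ?_⟩⟩
  · have hsat := h (dirClause C) (dirClause_mem_dirTrans.2 hC)
    exact sat_dirTrans_iff.1 (hsat.mono (dirTrans_erase_subset F C))
  · obtain ⟨C, hC, hvC⟩ := mem_mvars.1 hv
    exact sat_dirTrans_erase_aloClause (h C hC) hvC

omit [DecidableEq α] in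
lemma isAutarky_iff {φ : PAssign D} {F : Multiset (Clause D)} :
    IsAutarky φ F ↔ ∀ C ∈ F, ∀ v ∈ C.vars, v ∈ φ.vars → SatClause φ C := by
  simp [IsAutarky, Finset.Nonempty]

lemma IsAutarky.dirAssign {φ : PAssign D} {F : Finset (Clause D)} (h : IsAutarky φ F.val) :
    IsAutarky (dirAssign φ) (dirTrans F).val := by
  refine isAutarky_iff.2 (forall_mem_dirTrans.2 ⟨fun C hC l hl hlφ => ?_, fun v _ l hl hlφ => ?_⟩)
  · have hlC : l.1 ∈ C.vars := FinFn.fst_mem_vars (mem_vars_dirClause.1 hl)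
    exact satClause_dirAssign_dirClause.2
      (isAutarky_iff.1 h C hC l.1 hlC (mem_vars_dirAssign.1 hlφ).1)
  · obtain ⟨rfl, -⟩ := mem_vars_aloClause.1 hl
    exact satClause_dirAssign_aloClause.2 (mem_vars_dirAssign.1 hlφ).1

lemma IsDecoding.mem_vars_of_isAutarky {g : BAssign V α} {φ : PAssign D} (h : IsDecoding g φ)
    {F : Finset (Clause D)} (hg : IsAutarky g (dirTrans F).val) {v : V} {ε : α}
    (hv : v ∈ mvars F.val) (hε : ε ∈ D v) (hmem : (v, ε) ∈ g.vars) : v ∈ φ.vars :=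
  h.mem_vars_of_satClause v <| isAutarky_iff.1 hg _ (aloClause_mem_dirTrans hv) (v, ε)
    (mem_vars_aloClause.2 ⟨rfl, hε⟩) hmem

lemma IsDecoding.isAutarky {g : BAssign V α} {φ : PAssign D} (h : IsDecoding g φ)
    {F : Finset (Clause D)} (hg : IsAutarky g (dirTrans F).val) : IsAutarky φ F.val := by
  refine isAutarky_iff.2 fun C hC v hvC hvφ => ?_
  obtain ⟨ε, hε⟩ := FinFn.mem_vars.1 hvC
  obtain ⟨δ, hδ⟩ := FinFn.mem_vars.1 hvφ
  by_cases hδε : δ = ε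
  · subst hδε
    have hdir : SatClause g (dirClause C) :=
      isAutarky_iff.1 hg _ (dirClause_mem_dirTrans.2 hC) (v, δ) (mem_vars_dirClause.2 hε)
        (FinFn.fst_mem_vars (h.false_mem _ hδ))
    obtain ⟨l, hl, hgl⟩ := satClause_dirClause_iff.1 hdir
    have hlφ : l.1 ∈ φ.vars := h.mem_vars_of_isAutarky hg
      (mem_mvars.2 ⟨C, hC, FinFn.fst_mem_vars hl⟩) (C.2.1 l hl) (FinFn.fst_mem_vars hgl)
    exact ⟨l, hl, h.satLit hgl hlφ⟩
  · exact ⟨(v, ε), hε, δ, hδ, hδε⟩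

lemma isLean_dirTrans_iff {F : Finset (Clause D)} : IsLean (dirTrans F).val ↔ IsLean F.val := by
  refine not_congr ⟨fun ⟨g, hg, l, hl⟩ => ?_, fun ⟨φ, hφ, v, hv⟩ => ?_⟩
  · obtain ⟨hlg, hlF⟩ := Finset.mem_inter.1 hl
    obtain ⟨hv, hε⟩ := mem_mvars_dirTrans.1 hlF
    obtain ⟨φ, hφ⟩ := exists_isDecoding (D := D) g
    exact ⟨φ, hφ.isAutarky hg, l.1,
      Finset.mem_inter.2 ⟨hφ.mem_vars_of_isAutarky hg hv hε hlg, hv⟩⟩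
  · obtain ⟨hvφ, hvF⟩ := Finset.mem_inter.1 hv
    obtain ⟨ε, hε⟩ := nonempty_of_mem_mvars hvF
    exact ⟨dirAssign φ, hφ.dirAssign, (v, ε), Finset.mem_inter.2
      ⟨mem_vars_dirAssign.2 ⟨hvφ, hε⟩, mem_mvars_dirTrans.2 ⟨hvF, hε⟩⟩⟩

/-- the direct translation `Γ` preserves satisfiability, minimal
unsatisfiability, and leanness. -/
theorem dirTrans_preserves
    (hD : ∀ v, (D v).Nonempty) (F : Finset (Clause D)) :
    (Sat F.val ↔ Sat (dirTrans F).val) ∧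
    (MinUnsat F ↔ MinUnsat (dirTrans F)) ∧
    (IsLean F.val ↔ IsLean (dirTrans F).val) :=
  ⟨sat_dirTrans_iff.symm, minUnsat_dirTrans_iff.symm, isLean_dirTrans_iff.symm⟩

end GCLS
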